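/- Let P, Q ⊆ ℝ^d be polytopes. Then the union of those faces of P that are disjoint from Q is a strong deformation retract of P \ Q; in particular these two sets are homotopy equivalent. -/

import Mathlib

/-- `A` is a strong deformation retract of `B`. -/
def IsStrongDeformationRetract {E : Type*} [TopologicalSpace E] (A B : Set E) : Prop :=
  A ⊆ B ∧ ∃ H : C(↥B × ↥unitInterval, ↥B),
    (∀ b : B, H (b, 0) = b) ∧
    (∀ b : B, (b : E) ∈ A → ∀ t, H (b, t) = b) ∧
    (∀ b : B, ((H (b, 1) : E) ∈ A))

/-- A polytope is the convex hull of a finite set of points. -/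
def IsPolytope {E : Type*} [AddCommGroup E] [Module ℝ E] (P : Set E) : Prop :=
  ∃ S : Finset E, P = convexHull ℝ (S : Set E)

/-!
If `q` is a point of `P ∩ Q`, projecting radially away from `q` moves `P \ {q}` onto the union of
the faces of `P` that avoid `q` and fixes that union pointwise. The trajectory of a point outside
`Q` never meets `Q`: a point of it in `Q` would, by convexity of `Q`, put the starting point, which
lies between it and `q`, into `Q` as well. So `P \ Q` retracts onto a smaller union of faces minus
`Q`. The projection maps every face into itself, so it can be repeated inside the remaining
subcomplex with a new center as long as the subcomplex meets `Q`. Each round removes at least the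
face having the center in its relative interior, so finitely many rounds leave exactly the faces
disjoint from `Q`.
-/

open scoped Topology NNReal

namespace IsStrongDeformationRetract

section Topology

variable {E : Type*} [TopologicalSpace E] {A B C : Set E}

theorem iff_homotopicRel :
    IsStrongDeformationRetract A B ↔ A ⊆ B ∧ ∃ r : C(B, B), (∀ b, (r b : E) ∈ A) ∧
      (ContinuousMap.id B).HomotopicRel r (Subtype.val ⁻¹' A) := by
  refine and_congr_right fun _ => ⟨?_, ?_⟩
  · rintro ⟨H, H_zero, H_rel, H_one⟩
    exact ⟨⟨fun b => H (b, 1), by fun_prop⟩, H_one,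
      ⟨{ toFun := fun p => H (p.2, p.1)
         map_zero_left := H_zero
         map_one_left := fun _ => rfl
         prop' := fun t b hb => H_rel b hb t }⟩⟩
  · rintro ⟨r, hr, ⟨F⟩⟩
    exact ⟨⟨fun p => F (p.2, p.1), by fun_prop⟩, F.apply_zero,
      fun b hb t => F.eq_fst t hb, fun b => by simpa using hr b⟩

theorem refl (A : Set E) : IsStrongDeformationRetract A A :=
  iff_homotopicRel.2 ⟨subset_rfl, .id A, Subtype.prop, .refl _⟩

theorem trans (hAB : IsStrongDeformationRetract A B) (hBC : IsStrongDeformationRetract B C) :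
    IsStrongDeformationRetract A C := by
  obtain ⟨subAB, r, hr, ⟨F⟩⟩ := iff_homotopicRel.1 hAB
  obtain ⟨subBC, s, hs, ⟨G⟩⟩ := iff_homotopicRel.1 hBC
  let ι : C(B, C) := ⟨Set.inclusion subBC, continuous_inclusion subBC⟩
  let ρ : C(C, B) := ⟨fun c => ⟨s c, hs c⟩, by fun_prop⟩
  have ρ_eq (c : C) (hc : (c : E) ∈ A) : ρ c = ⟨c, subAB hc⟩ :=
    Subtype.ext (congrArg Subtype.val (G.fst_eq_snd (subAB hc)) :).symm
  have first : (ContinuousMap.id C).HomotopicRel s (Subtype.val ⁻¹' A) :=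
    ⟨⟨G.toHomotopy, fun t c hc => G.prop t c (subAB hc)⟩⟩
  have second : s.HomotopicRel (ι.comp (r.comp ρ)) (Subtype.val ⁻¹' A) :=
    ⟨⟨.comp (.refl ι) (F.toHomotopy.compContinuousMap ρ), fun t c hc =>
      congrArg ι <| F.eq_fst t (by simpa [ρ_eq c hc] using! hc)⟩⟩
  exact iff_homotopicRel.2
    ⟨subAB.trans subBC, ι.comp (r.comp ρ), fun c => hr (ρ c), first.trans second⟩

end Topology

theorem of_segment_subset {E : Type*} [AddCommGroup E] [Module ℝ E] [TopologicalSpace E]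
    [IsTopologicalAddGroup E] [ContinuousSMul ℝ E] {A B : Set E} {r : E → E} (hAB : A ⊆ B)
    (r_cont : ContinuousOn r B) (r_mem : Set.MapsTo r B A) (r_eq : Set.EqOn r id A)
    (hseg : ∀ x ∈ B, segment ℝ x (r x) ⊆ B) : IsStrongDeformationRetract A B := by
  have r_cont' : Continuous fun p : B × unitInterval => r p.1 :=
    r_cont.domRestrict.comp continuous_fst
  have lineMap_mem (p : B × unitInterval) : AffineMap.lineMap (p.1 : E) (r p.1) (p.2 : ℝ) ∈ B :=
    hseg p.1 p.1.2 (lineMap_mem_segment ℝ _ _ p.2.2)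
  refine ⟨hAB, ⟨fun p => ⟨_, lineMap_mem p⟩, ?_⟩, fun b => ?_, fun b hb t => ?_, fun b => ?_⟩
  · exact .subtype_mk (.lineMap (by fun_prop) r_cont' (by fun_prop)) _
  · simp
  · simp [r_eq hb]
  · simpa using r_mem b.2

end IsStrongDeformationRetract

section WeylTheorem

variable {𝕜 V : Type*} [Field 𝕜] [LinearOrder 𝕜] [IsStrictOrderedRing 𝕜]

/-- Fourier–Motzkin elimination of the unknown `t`. -/
theorem exists_nonneg_forall_mul_le_iff {ι : Type*} (s : Finset ι) (a c : ι → 𝕜) :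
    (∃ t, 0 ≤ t ∧ ∀ i ∈ s, t * a i ≤ c i) ↔
      (∀ i ∈ s, 0 ≤ a i → 0 ≤ c i) ∧
        ∀ i ∈ s, ∀ j ∈ s, 0 < a i → a j < 0 → a j * c i ≤ a i * c j := by
  constructor
  · rintro ⟨t, ht, h⟩
    refine ⟨fun i hi ha => (mul_nonneg ht ha).trans (h i hi), fun i hi j hj hai haj => ?_⟩
    calc a j * c i ≤ a j * (t * a i) := mul_le_mul_of_nonpos_left (h i hi) haj.le
      _ = a i * (t * a j) := by ring
      _ ≤ a i * c j := mul_le_mul_of_nonneg_left (h j hj) hai.le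
  · rintro ⟨hnonneg, hcross⟩
    let t := {j ∈ s | a j < 0}.fold max 0 fun j => c j / a j
    refine ⟨t, (Finset.le_fold_max _).2 (.inl le_rfl), fun i hi => ?_⟩
    rcases lt_trichotomy (a i) 0 with hai | hai | hai
    · rw [← div_le_iff_of_neg hai]
      exact (Finset.le_fold_max _).2 (.inr ⟨i, Finset.mem_filter.2 ⟨hi, hai⟩, le_rfl⟩)
    · simpa [hai] using hnonneg i hi hai.ge
    · rw [← le_div_iff₀ hai]
      refine (Finset.fold_max_le _).2 ⟨div_nonneg (hnonneg i hi hai.le) hai.le, fun j hj => ?_⟩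
      obtain ⟨hj, haj⟩ := Finset.mem_filter.1 hj
      rw [div_le_iff_of_neg haj, div_mul_eq_mul_div, div_le_iff₀ hai]
      linarith [hcross i hi j hj hai haj]

variable [AddCommGroup V] [Module 𝕜 V]

theorem mem_hull_singleton_sup {C : PointedCone 𝕜 V} {v x : V} :
    x ∈ PointedCone.hull 𝕜 {v} ⊔ C ↔ ∃ t : 𝕜, 0 ≤ t ∧ x - t • v ∈ C := by
  simp only [Submodule.mem_sup, Submodule.mem_span_singleton]
  constructor
  · rintro ⟨_, ⟨t, rfl⟩, z, hz, rfl⟩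
    exact ⟨t, t.2, by simpa [Nonneg.coe_smul] using hz⟩
  · rintro ⟨t, ht, hx⟩
    exact ⟨_, ⟨⟨t, ht⟩, rfl⟩, _, hx, add_sub_cancel _ _⟩

theorem dualFG_hull_singleton_sup {C : PointedCone 𝕜 V} (hC : C.DualFG .id) (v : V) :
    (PointedCone.hull 𝕜 {v} ⊔ C).DualFG .id := by
  classical
  obtain ⟨L, rfl⟩ := hC
  refine ⟨{f ∈ L | 0 ≤ f v} ∪ ({f ∈ L | 0 < f v} ×ˢ {g ∈ L | g v < 0}).image
    fun p => p.1 v • p.2 - p.2 v • p.1, ?_⟩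
  ext x
  have elimination := exists_nonneg_forall_mul_le_iff L (fun f => f v) (fun f => f x)
  simp only [mem_hull_singleton_sup, PointedCone.mem_dual, SetLike.mem_coe, LinearMap.id_apply,
    map_sub, map_smul, smul_eq_mul, sub_nonneg, elimination, Finset.forall_mem_union,
    Finset.forall_mem_image, Finset.mem_filter, Finset.mem_product, Prod.forall,
    LinearMap.sub_apply, LinearMap.smul_apply, and_imp]
  exact and_congr_right' ⟨fun h f hf g hg hfv hgv => h f g hf hfv hg hgv,
    fun h f g hf hfv hg hgv => h f hf g hg hfv hgv⟩

theorem dualFG_bot [FiniteDimensional 𝕜 V] : (⊥ : PointedCone 𝕜 V).DualFG .id := by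
  classical
  let B := Module.finBasis 𝕜 V
  refine ⟨Finset.univ.image B.coord ∪ Finset.univ.image (-B.coord), ?_⟩
  ext x
  have : (∀ i, 0 ≤ B.coord i x) ∧ (∀ i, 0 ≤ -B.coord i x) ↔ x = 0 := by
    simp only [← forall_and, neg_nonneg, ← le_antisymm_iff, eq_comm (a := (0 : 𝕜))]
    exact B.forall_coord_eq_zero_iff
  simpa [or_imp, forall_and] using this

/-- Weyl's half of the Minkowski–Weyl theorem. -/
theorem dualFG_of_fg [FiniteDimensional 𝕜 V] {C : PointedCone 𝕜 V} (hC : C.FG) :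
    C.DualFG .id := by
  classical
  obtain ⟨S, rfl⟩ := hC
  induction S using Finset.induction_on with
  | empty => simpa using dualFG_bot
  | insert v S _ ih =>
    rw [Finset.coe_insert, Submodule.span_insert]
    exact dualFG_hull_singleton_sup ih v

theorem mem_hull_image_finset {ι : Type*} {s : Finset ι} {v : ι → V} {x : V} :
    x ∈ PointedCone.hull 𝕜 (v '' s) ↔
      ∃ w : ι → 𝕜, (∀ i ∈ s, 0 ≤ w i) ∧ ∑ i ∈ s, w i • v i = x := by
  rw [Submodule.mem_span_image_finset_iff_exists_fun']
  constructor
  · rintro ⟨c, rfl⟩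
    exact ⟨fun i => c i, fun i _ => (c i).2, rfl⟩
  · rintro ⟨w, hw, rfl⟩
    refine ⟨fun i => ⟨max (w i) 0, le_max_right _ _⟩, Finset.sum_congr rfl fun i hi => ?_⟩
    rw [Nonneg.mk_smul, max_eq_left (hw i hi)]

theorem mem_convexHull_iff_mk_one_mem_hull {S : Finset V} {x : V} :
    x ∈ convexHull 𝕜 (S : Set V) ↔
      (x, (1 : 𝕜)) ∈ PointedCone.hull 𝕜 ((·, (1 : 𝕜)) '' (S : Set V)) := by
  simp only [Finset.mem_convexHull', mem_hull_image_finset, Prod.ext_iff, Prod.fst_sum,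
    Prod.snd_sum, Prod.smul_fst, Prod.smul_snd, smul_eq_mul, mul_one, and_comm]

end WeylTheorem

section Polyhedron

variable {E ι : Type*} [AddCommGroup E] [Module ℝ E] [TopologicalSpace E]

/-- The polyhedron cut out by the inequalities `l i x ≤ b i`. -/
def polyhedron (l : ι → StrongDual ℝ E) (b : ι → ℝ) : Set E :=
  {x | ∀ i, l i x ≤ b i}

/-- The indices of the inequalities `l i x ≤ b i` that hold with equality at `x`. -/
def activeSet (l : ι → StrongDual ℝ E) (b : ι → ℝ) (x : E) : Set ι :=
  {i | l i x = b i}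

/-- The smallest face of `polyhedron l b` containing its point `x`, obtained by turning the
inequalities active at `x` into equations. -/
def minFace (l : ι → StrongDual ℝ E) (b : ι → ℝ) (x : E) : Set E :=
  {y ∈ polyhedron l b | activeSet l b x ⊆ activeSet l b y}

variable {l : ι → StrongDual ℝ E} {b : ι → ℝ} {x y : E} {Q : Set E}

theorem minFace_subset_polyhedron : minFace l b x ⊆ polyhedron l b :=
  Set.sep_subset _ _

theorem self_mem_minFace (hx : x ∈ polyhedron l b) : x ∈ minFace l b x :=
  ⟨hx, subset_rfl⟩

theorem minFace_subset_minFace (hy : y ∈ minFace l b x) : minFace l b y ⊆ minFace l b x :=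
  fun _ hz => ⟨hz.1, hy.2.trans hz.2⟩

theorem convex_polyhedron : Convex ℝ (polyhedron l b) := by
  simp only [polyhedron, Set.ofPred_forall]
  exact convex_iInter fun i => convex_halfSpace_le (l i).isLinear (b i)

theorem convex_minFace : Convex ℝ (minFace l b x) := by
  have minFace_eq : minFace l b x = polyhedron l b ∩ ⋂ i ∈ activeSet l b x, {y | l i y = b i} := by
    ext y
    simp [minFace, activeSet, Set.subset_def]
  rw [minFace_eq]
  exact convex_polyhedron.inter <|
    convex_iInter₂ fun i _ => convex_hyperplane (l i).isLinear (b i)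

theorem isExposed_minFace [Finite ι] (hx : x ∈ polyhedron l b) :
    IsExposed ℝ (polyhedron l b) (minFace l b x) := by
  intro _
  have := Fintype.ofFinite ι
  classical
  let I : Finset ι := {i | l i x = b i}
  have sum_le {z : E} (hz : z ∈ polyhedron l b) : ∑ i ∈ I, l i z ≤ ∑ i ∈ I, b i :=
    Finset.sum_le_sum fun i _ => hz i
  have sum_eq_iff {z : E} (hz : z ∈ polyhedron l b) :
      ∑ i ∈ I, l i z = ∑ i ∈ I, b i ↔ activeSet l b x ⊆ activeSet l b z := by
    rw [Finset.sum_eq_sum_iff_of_le fun i _ => hz i]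
    simp [I, activeSet]
  have sum_self := (sum_eq_iff hx).2 subset_rfl
  refine ⟨∑ i ∈ I, l i, Set.ext fun y => and_congr_right fun hy => ?_⟩
  simp only [sum_apply, ← sum_eq_iff hy]
  exact ⟨fun h z hz => (sum_le hz).trans h.ge,
    fun h => (sum_le hy).antisymm (sum_self.ge.trans (h x hx))⟩

theorem exists_mem_openSegment_of_mem_minFace [Finite ι] (hx : x ∈ polyhedron l b)
    (hy : y ∈ minFace l b x) : ∃ z ∈ polyhedron l b, x ∈ openSegment ℝ y z := by
  have eventually_mem : ∀ᶠ ε : ℝ in 𝓝[>] 0, x + ε • (x - y) ∈ polyhedron l b := by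
    refine Filter.eventually_all.2 fun i => ?_
    simp only [map_add, map_smul, map_sub, smul_eq_mul]
    rcases (hx i).eq_or_lt with hi | hi
    · have hiy : l i y = b i := hy.2 hi
      simp [hi, hiy]
    · have : Filter.Tendsto (fun ε : ℝ => l i x + ε * (l i x - l i y)) (𝓝[>] 0) (𝓝 (l i x)) :=
        tendsto_nhdsWithin_of_tendsto_nhds <| Continuous.tendsto' (by fun_prop) _ _ (by simp)
      exact (this.eventually_lt_const hi).mono fun _ => le_of_lt
  obtain ⟨ε, hz, hε : 0 < ε⟩ := (eventually_mem.and self_mem_nhdsWithin).exists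
  refine ⟨_, hz, ε / (1 + ε), 1 / (1 + ε), by positivity, by positivity, by field_simp; ring, ?_⟩
  match_scalars <;> field_simp; ring

theorem minFace_subset_of_isExtreme [Finite ι] {F : Set E} (hF : IsExtreme ℝ (polyhedron l b) F)
    (hx : x ∈ F) : minFace l b x ⊆ F := by
  intro y hy
  obtain ⟨z, hz, hxyz⟩ := exists_mem_openSegment_of_mem_minFace (hF.subset hx) hy
  exact hF.left_mem_of_mem_openSegment hy.1 hz hx hxyz

theorem sUnion_isExposed_disjoint_eq [Finite ι] (Q : Set E) :
    ⋃₀ {F | IsExposed ℝ (polyhedron l b) F ∧ Disjoint F Q} =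
      {x ∈ polyhedron l b | Disjoint (minFace l b x) Q} := by
  ext x
  constructor
  · rintro ⟨F, ⟨hF, hFQ⟩, hx⟩
    exact ⟨hF.subset hx, hFQ.mono_left (minFace_subset_of_isExtreme hF.isExtreme hx)⟩
  · rintro ⟨hx, hxQ⟩
    exact ⟨_, ⟨isExposed_minFace hx, hxQ⟩, self_mem_minFace hx⟩

end Polyhedron

namespace IsPolytope

variable {E : Type*} [AddCommGroup E] [Module ℝ E] {P : Set E}

theorem convex (hP : IsPolytope P) : Convex ℝ P := by
  obtain ⟨S, rfl⟩ := hP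
  exact convex_convexHull ℝ _

variable [TopologicalSpace E] [IsTopologicalAddGroup E] [ContinuousSMul ℝ E]

theorem isVonNBounded (hP : IsPolytope P) : Bornology.IsVonNBounded ℝ P := by
  obtain ⟨S, rfl⟩ := hP
  exact (S.finite_toSet.isCompact_convexHull ℝ).isVonNBounded ℝ

theorem exists_eq_polyhedron [T2Space E] [FiniteDimensional ℝ E] (hP : IsPolytope P) :
    ∃ (n : ℕ) (l : Fin n → StrongDual ℝ E) (b : Fin n → ℝ), P = polyhedron l b := by
  classical
  obtain ⟨S, rfl⟩ := hP
  obtain ⟨L, hL⟩ := dualFG_of_fg (C := PointedCone.hull ℝ ((·, (1 : ℝ)) '' (S : Set E)))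
    (Submodule.fg_span (S.finite_toSet.image _))
  let f (i : Fin L.card) : Module.Dual ℝ (E × ℝ) := L.equivFin.symm i
  refine ⟨L.card, fun i => -(f i ∘ₗ .inl ℝ E ℝ).toContinuousLinearMap, fun i => f i (0, 1), ?_⟩
  ext x
  have f_apply (i : Fin L.card) : f i (x, 1) = f i (x, 0) + f i (0, 1) := by simp [← map_add]
  rw [mem_convexHull_iff_mk_one_mem_hull, ← hL]
  calc (x, 1) ∈ PointedCone.dual .id (L : Set (Module.Dual ℝ (E × ℝ)))
      ↔ ∀ g : L, 0 ≤ (g : Module.Dual ℝ (E × ℝ)) (x, 1) := by simp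
    _ ↔ ∀ i, 0 ≤ f i (x, 1) := L.equivFin.symm.surjective.forall
    _ ↔ _ := by simp [polyhedron, f_apply, neg_le_iff_add_nonneg']

end IsPolytope

section RadialProjection

theorem eq_of_forall_lineMap_mem_of_isVonNBounded {E : Type*} [AddCommGroup E] [Module ℝ E]
    [TopologicalSpace E] [IsTopologicalAddGroup E] [ContinuousSMul ℝ E] [T2Space E] {S : Set E}
    (hS : Bornology.IsVonNBounded ℝ S) {x y : E}
    (hxy : ∀ t : ℝ, 0 ≤ t → AffineMap.lineMap x y t ∈ S) : x = y := by
  let u (n : ℕ) : ℝ := (n : ℝ)⁻¹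
  have hu : Filter.Tendsto u .atTop (𝓝 0) := tendsto_inv_atTop_nhds_zero_nat
  have tendsto_zero : Filter.Tendsto (fun n : ℕ => u n • AffineMap.lineMap x y (n : ℝ))
      .atTop (𝓝 0) :=
    hS.smul_tendsto_zero (.of_forall fun n => hxy n n.cast_nonneg) hu
  have tendsto_sub : Filter.Tendsto (fun n : ℕ => u n • AffineMap.lineMap x y (n : ℝ))
      .atTop (𝓝 (y - x)) := by
    have : Filter.Tendsto (fun n => y - x + u n • x) .atTop (𝓝 (y - x)) := by
      simpa using (hu.smul_const x).const_add (y - x)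
    refine this.congr' ?_
    filter_upwards [Filter.eventually_ne_atTop 0] with n hn
    simp [AffineMap.lineMap_apply_module', smul_smul, u, hn]
  exact (sub_eq_zero.1 (tendsto_nhds_unique tendsto_sub tendsto_zero)).symm

variable {E ι : Type*} [AddCommGroup E] [Module ℝ E] [TopologicalSpace E] [Fintype ι]

/-- The infimum of the ratios `r > 0` for which the homothety with center `q` and ratio `r` maps
`polyhedron l b` onto a set containing `x`, for points `q` and `x` of the polyhedron. The homothety
preserves the constraints active at `q`, and division by zero makes them contribute `0`. -/
noncomputable def radialGauge (l : ι → StrongDual ℝ E) (b : ι → ℝ) (q x : E) : ℝ≥0 :=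
  Finset.univ.sup fun i => ((l i x - l i q) / (b i - l i q)).toNNReal

/-- The projection from the center `q` onto the union of the faces of `polyhedron l b` that do not
contain `q`. Where the gauge vanishes, its inverse is `0` and the value is `q`. -/
noncomputable def radialProj (l : ι → StrongDual ℝ E) (b : ι → ℝ) (q x : E) : E :=
  AffineMap.lineMap q x (radialGauge l b q x : ℝ)⁻¹

variable {l : ι → StrongDual ℝ E} {b : ι → ℝ} {q x : E}

theorem continuous_radialGauge : Continuous (radialGauge l b q) := by
  unfold radialGauge
  fun_prop

theorem continuousOn_radialProj [IsTopologicalAddGroup E] [ContinuousSMul ℝ E] :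
    ContinuousOn (radialProj l b q) {x | radialGauge l b q x ≠ 0} :=
  .lineMap continuousOn_const continuousOn_id <|
    (NNReal.continuous_coe.comp continuous_radialGauge).continuousOn.inv₀ fun _ hx =>
      NNReal.coe_ne_zero.2 hx

theorem radialGauge_lineMap (t : ℝ≥0) :
    radialGauge l b q (AffineMap.lineMap q x (t : ℝ)) = t * radialGauge l b q x := by
  simp only [radialGauge, NNReal.mul_finset_sup]
  refine Finset.sup_congr rfl fun i _ => ?_
  have : l i (AffineMap.lineMap q x (t : ℝ)) - l i q = t * (l i x - l i q) := by
    simp [AffineMap.lineMap_apply_module']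
  rw [this, mul_div_assoc, Real.toNNReal_mul t.coe_nonneg, Real.toNNReal_coe]

theorem sub_le_radialGauge_mul_sub (hq : q ∈ polyhedron l b) (hx : x ∈ polyhedron l b) (i : ι) :
    l i x - l i q ≤ radialGauge l b q x * (b i - l i q) := by
  rcases (hq i).eq_or_lt with hi | hi
  · simpa [hi] using hx i
  · rw [← div_le_iff₀ (sub_pos.2 hi), ← Real.toNNReal_le_iff_le_coe]
    exact Finset.le_sup (f := fun i => ((l i x - l i q) / (b i - l i q)).toNNReal)
      (Finset.mem_univ i)

theorem radialGauge_le_one (hq : q ∈ polyhedron l b) (hx : x ∈ polyhedron l b) :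
    radialGauge l b q x ≤ 1 := by
  refine Finset.sup_le fun i _ => Real.toNNReal_le_one.2 ?_
  exact div_le_one_of_le₀ (sub_le_sub_right (hx i) _) (sub_nonneg.2 (hq i))

theorem radialGauge_lt_one_iff (hq : q ∈ polyhedron l b) (hx : x ∈ polyhedron l b) :
    radialGauge l b q x < 1 ↔ q ∈ minFace l b x := by
  have div_lt_one_iff (i : ι) :
      (l i x - l i q) / (b i - l i q) < 1 ↔ (l i x = b i → l i q = b i) := by
    rcases (hq i).eq_or_lt with hi | hi
    · simp [hi]
    · simp [div_lt_one (sub_pos.2 hi), hi.ne, (hx i).lt_iff_ne]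
  rw [radialGauge, Finset.sup_lt_iff (by simp)]
  simp [div_lt_one_iff, minFace, activeSet, hq]

theorem radialGauge_pos [IsTopologicalAddGroup E] [ContinuousSMul ℝ E] [T2Space E]
    (hbdd : Bornology.IsVonNBounded ℝ (polyhedron l b)) (hq : q ∈ polyhedron l b)
    (hx : x ∈ polyhedron l b) (hqx : q ≠ x) : 0 < radialGauge l b q x := by
  by_contra! hzero
  refine hqx (eq_of_forall_lineMap_mem_of_isVonNBounded hbdd fun t ht i => ?_)
  have nonpos : l i x - l i q ≤ 0 := by
    simpa [nonpos_iff_eq_zero.1 hzero] using sub_le_radialGauge_mul_sub hq hx i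
  calc l i (AffineMap.lineMap q x t) = l i q + t * (l i x - l i q) := by
        simp [AffineMap.lineMap_apply_module', add_comm]
    _ ≤ l i q := by simpa using mul_nonpos_of_nonneg_of_nonpos ht nonpos
    _ ≤ b i := hq i

theorem radialProj_of_notMem_minFace (hq : q ∈ polyhedron l b) (hx : x ∈ polyhedron l b)
    (hqx : q ∉ minFace l b x) : radialProj l b q x = x := by
  rw [← radialGauge_lt_one_iff hq hx, not_lt] at hqx
  simp [radialProj, (radialGauge_le_one hq hx).antisymm hqx]

theorem radialProj_mem_minFace (hq : q ∈ polyhedron l b) (hx : x ∈ polyhedron l b) :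
    radialProj l b q x ∈ minFace l b x := by
  by_cases hqx : q ∈ minFace l b x
  · let g : ℝ := radialGauge l b q x
    have l_radialProj (i : ι) : l i (radialProj l b q x) = g⁻¹ * (l i x - l i q) + l i q := by
      simp [radialProj, AffineMap.lineMap_apply_module', g]
    refine ⟨fun i => ?_, fun i (hi : l i x = b i) => ?_⟩
    · have : g⁻¹ * (l i x - l i q) ≤ b i - l i q :=
        calc g⁻¹ * (l i x - l i q) ≤ g⁻¹ * (g * (b i - l i q)) :=
              mul_le_mul_of_nonneg_left (sub_le_radialGauge_mul_sub hq hx i) (by positivity)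
          _ = (g⁻¹ * g) * (b i - l i q) := (mul_assoc _ _ _).symm
          _ ≤ b i - l i q := mul_le_of_le_one_left (sub_nonneg.2 (hq i)) inv_mul_le_one
      linarith [l_radialProj i]
    · have hiq : l i q = b i := hqx.2 hi
      simp [activeSet, l_radialProj, hi, hiq]
  · rw [radialProj_of_notMem_minFace hq hx hqx]
    exact self_mem_minFace hx

theorem notMem_minFace_radialProj (hq : q ∈ polyhedron l b) (hx : x ∈ polyhedron l b)
    (hpos : 0 < radialGauge l b q x) : q ∉ minFace l b (radialProj l b q x) := by
  have gauge_eq_one : radialGauge l b q (radialProj l b q x) = 1 := by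
    rw [radialProj, ← NNReal.coe_inv, radialGauge_lineMap, inv_mul_cancel₀ hpos.ne']
  rw [← radialGauge_lt_one_iff hq (radialProj_mem_minFace hq hx).1, gauge_eq_one]
  exact lt_irrefl 1

theorem wbtw_radialProj (hq : q ∈ polyhedron l b) (hx : x ∈ polyhedron l b)
    (hpos : 0 < radialGauge l b q x) : Wbtw ℝ q x (radialProj l b q x) :=
  ⟨radialGauge l b q x, ⟨NNReal.coe_nonneg _, radialGauge_le_one hq hx⟩, by
    simp [radialProj, hpos.ne']⟩

end RadialProjection

section Retraction

variable {E ι : Type*} [AddCommGroup E] [Module ℝ E] [TopologicalSpace E]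
  {l : ι → StrongDual ℝ E} {b : ι → ℝ} {Q X : Set E} {q : E}

/-- `X` is a union of faces of `polyhedron l b`. -/
structure IsSubcomplex (l : ι → StrongDual ℝ E) (b : ι → ℝ) (X : Set E) : Prop where
  subset : X ⊆ polyhedron l b
  minFace_subset : ∀ x ∈ X, minFace l b x ⊆ X

theorem isSubcomplex_polyhedron : IsSubcomplex l b (polyhedron l b) :=
  ⟨subset_rfl, fun _ _ => minFace_subset_polyhedron⟩

namespace IsSubcomplex

theorem sep_notMem_minFace (hX : IsSubcomplex l b X) (q : E) :
    IsSubcomplex l b {x ∈ X | q ∉ minFace l b x} where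
  subset _ hx := hX.subset hx.1
  minFace_subset x hx _ hy :=
    ⟨hX.minFace_subset x hx.1 hy, fun hqy => hx.2 (minFace_subset_minFace hy hqy)⟩

theorem image_activeSet_sep_ssubset (hX : IsSubcomplex l b X) (hq : q ∈ X) :
    activeSet l b '' {x ∈ X | q ∉ minFace l b x} ⊂ activeSet l b '' X := by
  refine Set.ssubset_iff_exists.2 ⟨Set.image_mono (Set.sep_subset _ _), _, ⟨q, hq, rfl⟩, ?_⟩
  rintro ⟨x, ⟨-, hqx⟩, hactive⟩
  exact hqx ⟨hX.subset hq, hactive.subset⟩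

variable [IsTopologicalAddGroup E] [ContinuousSMul ℝ E] [T2Space E] [Finite ι]

theorem isStrongDeformationRetract_sep_diff (hX : IsSubcomplex l b X)
    (hbdd : Bornology.IsVonNBounded ℝ (polyhedron l b)) (hQ : Convex ℝ Q) (hqX : q ∈ X)
    (hqQ : q ∈ Q) :
    IsStrongDeformationRetract ({x ∈ X | q ∉ minFace l b x} \ Q) (X \ Q) := by
  have := Fintype.ofFinite ι
  have hq := hX.subset hqX
  have gauge_pos {x : E} (hx : x ∈ X \ Q) : 0 < radialGauge l b q x :=
    radialGauge_pos hbdd hq (hX.subset hx.1) (ne_of_mem_of_not_mem hqQ hx.2)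
  have segment_subset (x : E) (hx : x ∈ X \ Q) : segment ℝ x (radialProj l b q x) ⊆ X \ Q := by
    have hxP := hX.subset hx.1
    refine Set.subset_sdiff.2 ⟨?_, Set.disjoint_left.2 fun y hy hyQ => hx.2 ?_⟩
    · exact (convex_minFace.segment_subset (self_mem_minFace hxP)
        (radialProj_mem_minFace hq hxP)).trans (hX.minFace_subset x hx.1)
    · have hqxy : Wbtw ℝ q x y :=
        (wbtw_radialProj hq hxP (gauge_pos hx)).trans_right_left (mem_segment_iff_wbtw.1 hy)
      exact hQ.segment_subset hqQ hyQ hqxy.mem_segment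
  refine .of_segment_subset (r := radialProj l b q) ?_ ?_ ?_ ?_ segment_subset
  · exact Set.sdiff_subset_sdiff_left (Set.sep_subset _ _)
  · exact continuousOn_radialProj.mono fun x hx => (gauge_pos hx).ne'
  · intro x hx
    have := segment_subset x hx (right_mem_segment ℝ _ _)
    exact ⟨⟨this.1, notMem_minFace_radialProj hq (hX.subset hx.1) (gauge_pos hx)⟩, this.2⟩
  · rintro x ⟨⟨hxX, hqx⟩, -⟩
    exact radialProj_of_notMem_minFace hq (hX.subset hxX) hqx

theorem isStrongDeformationRetract_disjoint_minFace (hX : IsSubcomplex l b X)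
    (hbdd : Bornology.IsVonNBounded ℝ (polyhedron l b)) (hQ : Convex ℝ Q) :
    IsStrongDeformationRetract {x ∈ X | Disjoint (minFace l b x) Q} (X \ Q) := by
  induction hactive : activeSet l b '' X using WellFoundedLT.induction generalizing X with
  | ind _ ih =>
    subst hactive
    rcases (X ∩ Q).eq_empty_or_nonempty with hXQ | ⟨q, hqX, hqQ⟩
    · rw [← Set.disjoint_iff_inter_eq_empty] at hXQ
      have sep_eq : {x ∈ X | Disjoint (minFace l b x) Q} = X :=
        Set.sep_eq_self_iff_mem_true.2 fun x hx => hXQ.mono_left (hX.minFace_subset x hx)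
      rw [sep_eq, hXQ.sdiff_eq_left]
      exact .refl X
    · have sep_eq : {x ∈ {x ∈ X | q ∉ minFace l b x} | Disjoint (minFace l b x) Q} =
          {x ∈ X | Disjoint (minFace l b x) Q} := by
        ext x
        exact and_congr_left fun hx =>
          and_iff_left fun hqx => Set.disjoint_left.1 hx hqx hqQ
      have retract := ih _ (hX.image_activeSet_sep_ssubset hqX) (hX.sep_notMem_minFace q) rfl
      exact (sep_eq ▸ retract).trans (hX.isStrongDeformationRetract_sep_diff hbdd hQ hqX hqQ)

end IsSubcomplex

end Retraction

theorem statement3_general {E : Type*} [AddCommGroup E] [Module ℝ E] [TopologicalSpace E]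
    [IsTopologicalAddGroup E] [ContinuousSMul ℝ E] [T2Space E] [FiniteDimensional ℝ E]
    {P Q : Set E} (hP : IsPolytope P) (hQ : Convex ℝ Q) :
    IsStrongDeformationRetract (⋃₀ {F : Set E | IsExposed ℝ P F ∧ F ∩ Q = ∅}) (P \ Q) := by
  have hbdd := hP.isVonNBounded
  obtain ⟨n, l, b, rfl⟩ := hP.exists_eq_polyhedron
  simp only [← Set.disjoint_iff_inter_eq_empty, sUnion_isExposed_disjoint_eq]
  exact isSubcomplex_polyhedron.isStrongDeformationRetract_disjoint_minFace hbdd hQ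

/-- For polytopes `P, Q ⊆ ℝ^d`, the union of the (exposed) faces of `P` disjoint from `Q`
is a strong deformation retract of `P \ Q`. -/
theorem statement3 {d : ℕ} (P Q : Set (EuclideanSpace ℝ (Fin d)))
    (hP : IsPolytope P) (hQ : IsPolytope Q) :
    IsStrongDeformationRetract
      (⋃₀ {F : Set (EuclideanSpace ℝ (Fin d)) | IsExposed ℝ P F ∧ F ∩ Q = ∅})
      (P \ Q) :=
  statement3_general hP hQ.convex
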